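/- Let G be a grid diagram of size n, and let C^-(G) be the grid complex over R = (ℤ/2)[U_1, …, U_n] with differential ∂x = Σ_y Σ_r U_1^{O_1(r)} ⋯ U_n^{O_n(r)} · y, summing over empty rectangles r from x to y with no X-marking in their interior. If the indices i and j lie in the same orbit of the permutation σ_X^{-1} ∘ σ_O of ℤ/n (i.e., the O-markings O_i and O_j lie on the same component of the link presented by G), then multiplication by U_i and multiplication by U_j are chain-homotopic R-linear endomorphisms of C^-(G); in particular, U_i and U_j induce the same endomorphism of the homology H_*(C^-(G)). -/

import Mathlib

/-!
STATEMENT 6. If the indices `i` and `j` lie in the same orbit of the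
permutation `σX⁻¹ ∘ σO` of `ZMod n` (i.e. the markings `O_i` and `O_j` lie on
the same component of the link presented by the grid diagram `G`), then
multiplication by `U_i` and multiplication by `U_j` are chain-homotopic
`R`-linear endomorphisms of the grid complex `C⁻(G)` over
`R = (ℤ/2)[U_1, …, U_n]`; in particular, `U_i` and `U_j` induce the same
endomorphism of the homology `H_*(C⁻(G))` (formalized concretely: `U_i − U_j`
sends cycles to boundaries).
-/

namespace GridDiagrams

attribute [local instance] Classical.propDecidable

variable {n : ℕ}

/-- `c` lies in the cyclic half-open interval `[a, b)` in `ZMod n`. -/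
def cycIco (a b c : ZMod n) : Prop := (c - a).val < (b - a).val

/-- `c` lies in the open cyclic interval `(a, b)` in `ZMod n`. -/
def cycIoo (a b c : ZMod n) : Prop := 0 < (c - a).val ∧ (c - a).val < (b - a).val

/-- The set of squares making up the rectangle determined by the generator `x`
and the ordered pair of columns `(a, b)`. -/
def rectSquares (x : Equiv.Perm (ZMod n)) (a b : ZMod n) : Set (ZMod n × ZMod n) :=
  {q | cycIco a b q.1 ∧ cycIco (x a) (x b) q.2}

/-- The lattice points in the open interior of the rectangle determined by `x`
and the ordered pair of columns `(a, b)`. -/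
def rectInterior (x : Equiv.Perm (ZMod n)) (a b : ZMod n) : Set (ZMod n × ZMod n) :=
  {q | cycIoo a b q.1 ∧ cycIoo (x a) (x b) q.2}

/-- The ordered pair `(a, b)` determines a rectangle from `x` to `y`. -/
def IsRect (x y : Equiv.Perm (ZMod n)) (a b : ZMod n) : Prop :=
  a ≠ b ∧ y = x * Equiv.swap a b

/-- The ordered pair `(a, b)` determines an empty rectangle from `x` to `y`. -/
def IsEmptyRect (x y : Equiv.Perm (ZMod n)) (a b : ZMod n) : Prop :=
  IsRect x y a b ∧ ∀ i : ZMod n, (i, x i) ∉ rectInterior x a b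

/-- The empty rectangle determined by `(a, b)` from `x` to `y` counts in the
differential: additionally, no `X`-marking lies in its interior. -/
def CountsInDiff (σX : Equiv.Perm (ZMod n)) (x y : Equiv.Perm (ZMod n))
    (a b : ZMod n) : Prop :=
  IsEmptyRect x y a b ∧ ∀ i : ZMod n, (i, σX i) ∉ rectSquares x a b

/-- `O_i(r) ∈ {0, 1}`: whether the `i`-th `O`-marking lies in the interior of
the rectangle determined by `x` and `(a, b)`. -/
noncomputable def Ocount (σO : Equiv.Perm (ZMod n)) (x : Equiv.Perm (ZMod n))
    (a b i : ZMod n) : ℕ :=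
  if (i, σO i) ∈ rectSquares x a b then 1 else 0

/-- The ground ring `(ℤ/2)[U_1, …, U_n]`, with one variable per column. -/
abbrev GridRing (n : ℕ) := MvPolynomial (ZMod n) (ZMod 2)

/-- The grid complex `C⁻(G)`: the free `(ℤ/2)[U_1, …, U_n]`-module with basis
the generators of `G`. -/
abbrev GridC (n : ℕ) := Equiv.Perm (ZMod n) →₀ GridRing n

/-- The monomial `U_1^{O_1(r)} ⋯ U_n^{O_n(r)}` attached to the rectangle
determined by `x` and `(a, b)`. -/
noncomputable def Omonomial [NeZero n] (σO : Equiv.Perm (ZMod n))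
    (x : Equiv.Perm (ZMod n)) (a b : ZMod n) : GridRing n :=
  ∏ i : ZMod n, (MvPolynomial.X i : GridRing n) ^ Ocount σO x a b i

/-- The value of the differential on the generator `x`:
`∂x = Σ_y Σ_r U_1^{O_1(r)} ⋯ U_n^{O_n(r)} · y`. -/
noncomputable def diffImage [NeZero n] (σO σX : Equiv.Perm (ZMod n))
    (x : Equiv.Perm (ZMod n)) : GridC n :=
  ∑ y : Equiv.Perm (ZMod n), ∑ a : ZMod n, ∑ b : ZMod n,
    if CountsInDiff σX x y a b then Finsupp.single y (Omonomial σO x a b) else 0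

/-- The differential `∂` of the grid complex `C⁻(G)`, as a
`(ℤ/2)[U_1, …, U_n]`-linear endomorphism. -/
noncomputable def gridDiff [NeZero n] (σO σX : Equiv.Perm (ZMod n)) :
    GridC n →ₗ[GridRing n] GridC n :=
  Finsupp.lsum (GridRing n) fun x =>
    LinearMap.toSpanSingleton (GridRing n) (GridC n) (diffImage σO σX x)

/-- Multiplication by the variable `U_i`, as an endomorphism of `C⁻(G)`. -/
noncomputable def Umul (n : ℕ) (i : ZMod n) : GridC n →ₗ[GridRing n] GridC n :=
  (MvPolynomial.X i : GridRing n) • LinearMap.id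

/-!
Suppose that `O_i` lies in the row of `X_j`, and let `H` count the empty rectangles whose only
`X`-marking is `X_j`. Then `∂ H + H ∂` is a sum over the juxtapositions of two empty rectangles
whose domains contain `X_j` once and no other `X`-marking. Those that do not return to their initial
generator cancel in pairs, since their domain decomposes in exactly two ways. For two disjoint pairs
of columns, the two rectangles are exchanged; for pairs sharing a column, an L-shaped domain is cut
along its other edge. The new rectangles are again empty because the Maslov index depends only on
the domain and its two endpoints, is additive, and is at least one on a rectangle, with equality
exactly when the rectangle is empty.
The remaining juxtapositions are the annuli of width one: the column of `X_j`, which contributes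
`U_j`, and the row of `X_j`, which contributes `U_i`. Composing these homotopies along the orbit
of `σX⁻¹ * σO` gives the theorem.
-/

open Equiv (Perm swap)

section CircularOrder

variable {α : Type*}

theorem pairwise_ne_of_sbtw [CircularPreorder α] {a b c : α} (h : sbtw a b c) :
    a ≠ b ∧ a ≠ c ∧ b ≠ c := by
  refine ⟨?_, ?_, ?_⟩ <;> rintro rfl
  exacts [sbtw_irrefl_left h, sbtw_irrefl_left_right h, sbtw_irrefl_right h]

theorem sbtw_or_sbtw_of_ne [CircularOrder α] {a b c : α} (hab : a ≠ b) (hac : a ≠ c)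
    (hbc : b ≠ c) : sbtw a b c ∨ sbtw a c b := by
  by_contra! h
  have habc : btw c b a := btw_iff_not_sbtw.2 h.1
  have hacb : btw b c a := btw_iff_not_sbtw.2 h.2
  rcases habc.antisymm hacb.cyclic_left.cyclic_left with h | h | h
  exacts [hbc h.symm, hab h.symm, hac h]

end CircularOrder

section CyclicIntervals

/-- The indicator function of the cyclic interval `[a, b)`. -/
noncomputable def icoInd (a b k : ZMod n) : ℕ := if cycIco a b k then 1 else 0

theorem icoInd_add_one [Fact (1 < n)] (m : ZMod n) : icoInd m (m + 1) = Pi.single m 1 := by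
  funext k
  simp [icoInd, cycIco, ZMod.val_one, sub_eq_zero, Pi.single_apply]

variable [NeZero n]

theorem val_sub_eq_ite (a b : ZMod n) :
    (b - a).val = if a.val ≤ b.val then b.val - a.val else n + b.val - a.val := by
  split_ifs with h
  · exact ZMod.val_sub h
  · have ha := ZMod.val_lt a
    have hcast : b - a = ((n + b.val - a.val : ℕ) : ZMod n) := by
      rw [Nat.cast_sub (by omega)]
      simp
    rw [hcast, ZMod.val_cast_of_lt (by omega)]

theorem sbtw_iff_val {a b c : ZMod n} :
    sbtw a b c ↔ a.val < b.val ∧ b.val < c.val ∨ b.val < c.val ∧ c.val < a.val ∨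
      c.val < a.val ∧ a.val < b.val := by
  obtain _ | n := n
  · exact absurd rfl (NeZero.ne 0)
  · exact Iff.rfl

theorem cycIoo_iff_sbtw {a b c : ZMod n} : cycIoo a b c ↔ sbtw a c b := by
  have ha := ZMod.val_lt a
  have hb := ZMod.val_lt b
  have hc := ZMod.val_lt c
  rw [cycIoo, sbtw_iff_val, val_sub_eq_ite, val_sub_eq_ite]
  split_ifs <;> omega

theorem icoInd_eq_val (a b k : ZMod n) :
    (icoInd a b k : ℤ) = (if b.val < a.val then 1 else 0) + (if a.val ≤ k.val then 1 else 0)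
      - (if b.val ≤ k.val then 1 else 0) := by
  have ha := ZMod.val_lt a
  have hb := ZMod.val_lt b
  have hk := ZMod.val_lt k
  rw [icoInd, cycIco, val_sub_eq_ite, val_sub_eq_ite]
  split_ifs <;> omega

theorem icoInd_sub_one_eq_val (a b k : ZMod n) :
    (icoInd a b (k - 1) : ℤ) = (if b.val < a.val then 1 else 0)
      + (if a.val < k.val then 1 else 0) - (if b.val < k.val then 1 else 0) := by
  have ha := ZMod.val_lt a
  have hb := ZMod.val_lt b
  have hk : (k - 1).val = if k.val = 0 then n - 1 else k.val - 1 := by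
    obtain rfl | hn := eq_or_ne n 1
    · simp [Subsingleton.elim k 0]
    · have := NeZero.pos n
      rw [val_sub_eq_ite, ZMod.val_one'' hn]
      split_ifs <;> omega
  rw [icoInd_eq_val, hk]
  split_ifs <;> omega

theorem icoInd_eq_add {a b : ZMod n} (hab : a ≠ b) (k : ZMod n) :
    icoInd a b k = (if k = a then 1 else 0) + (if sbtw a k b then 1 else 0) := by
  have hab := (ZMod.val_injective n).ne hab
  have h := icoInd_eq_val a b k
  simp only [sbtw_iff_val, ← (ZMod.val_injective n).eq_iff]
  split_ifs at h ⊢ <;> omega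

theorem icoInd_sub_one_eq_add {a b : ZMod n} (hab : a ≠ b) (k : ZMod n) :
    icoInd a b (k - 1) = (if k = b then 1 else 0) + (if sbtw a k b then 1 else 0) := by
  have hab := (ZMod.val_injective n).ne hab
  have h := icoInd_sub_one_eq_val a b k
  simp only [sbtw_iff_val, ← (ZMod.val_injective n).eq_iff]
  split_ifs at h ⊢ <;> omega

theorem icoInd_add_icoInd {a b c : ZMod n} (h : sbtw a b c) (k : ZMod n) :
    icoInd a b k + icoInd b c k = icoInd a c k := by
  have hab := icoInd_eq_val a b k
  have hbc := icoInd_eq_val b c k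
  have hac := icoInd_eq_val a c k
  rw [sbtw_iff_val] at h
  split_ifs at hab hbc hac <;> omega

theorem icoInd_add_icoInd_swap {a b : ZMod n} (hab : a ≠ b) (k : ZMod n) :
    icoInd a b k + icoInd b a k = 1 := by
  have hab := (ZMod.val_injective n).ne hab
  have h := icoInd_eq_val a b k
  have h' := icoInd_eq_val b a k
  split_ifs at h h' <;> omega

theorem icoInd_sub_one_sub (a b c d : ZMod n) :
    (icoInd a b (c - 1) - icoInd a b (d - 1) : ℤ) = icoInd c d b - icoInd c d a := by
  rw [icoInd_sub_one_eq_val, icoInd_sub_one_eq_val, icoInd_eq_val, icoInd_eq_val]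
  split_ifs <;> omega

theorem not_sbtw_add_one [Fact (1 < n)] (m k : ZMod n) : ¬ sbtw m k (m + 1) := by
  rw [← cycIoo_iff_sbtw, cycIoo, add_sub_cancel_left, ZMod.val_one]
  omega

theorem icoInd_eq_single_iff [Fact (1 < n)] {a b m : ZMod n} :
    icoInd a b = Pi.single m 1 ↔ a = m ∧ b = m + 1 := by
  refine ⟨fun h => ?_, fun ⟨ha, hb⟩ => by rw [ha, hb, icoInd_add_one]⟩
  have hind (k : ZMod n) : (k - a).val < (b - a).val ↔ k = m := by
    have hk := congrFun h k
    rw [icoInd, cycIco, Pi.single_apply] at hk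
    split_ifs at hk <;> simp_all
  have hpos : 0 < (b - a).val := (Nat.zero_le _).trans_lt ((hind m).2 rfl)
  obtain rfl : a = m := (hind a).1 (by simpa using hpos)
  have hle : ¬ 1 < (b - a).val := by simpa [ZMod.val_one] using (hind (a + 1)).not.2 (by simp)
  have hone : (b - a).val = (1 : ZMod n).val := by rw [ZMod.val_one]; omega
  exact ⟨rfl, by rw [← ZMod.val_injective n hone, add_sub_cancel]⟩

end CyclicIntervals

/-- A domain on the grid torus: a formal sum of squares, given by its multiplicities. The square
`(i, j)` has lower-left corner `(i, j)` and upper-right corner `(i + 1, j + 1)`. -/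
abbrev Domain (n : ℕ) := ZMod n × ZMod n → ℕ

/-- The domain of the rectangle that starts at the generator `x` and has columns `[a, b)`. -/
noncomputable def rectDomain (x : Perm (ZMod n)) (a b : ZMod n) : Domain n :=
  fun q => icoInd a b q.1 * icoInd (x a) (x b) q.2

theorem rectDomain_apply (x : Perm (ZMod n)) (a b : ZMod n) (q : ZMod n × ZMod n) :
    rectDomain x a b q = if q ∈ rectSquares x a b then 1 else 0 := by
  rw [rectDomain, icoInd, icoInd, ite_zero_mul_ite_zero, mul_one]
  exact if_congr Iff.rfl rfl rfl

/-- The pair `(a, b)` of columns spans an empty rectangle starting at `x`. -/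
def SpansEmptyRect (x : Perm (ZMod n)) (a b : ZMod n) : Prop :=
  IsEmptyRect x (x * swap a b) a b

section MaslovIndex

variable [NeZero n]

theorem spansEmptyRect_iff {x : Perm (ZMod n)} {a b : ZMod n} :
    SpansEmptyRect x a b ↔ a ≠ b ∧ ∀ k, ¬ (sbtw a k b ∧ sbtw (x a) (x k) (x b)) := by
  simp [SpansEmptyRect, IsEmptyRect, IsRect, rectInterior, cycIoo_iff_sbtw]

/-- The Maslov index of a domain `D` from the generator `x` to the generator `z`, following
Lipshitz's formula: the Euler measure, which vanishes on sums of rectangles, plus the average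
multiplicity of `D` around the points of `x` and `z`. On the domains that occur here the four-square
average may be replaced by the upper-right square at points of `x` and the lower-left one at points
of `z`. -/
def maslovIndex (x z : Perm (ZMod n)) (D : Domain n) : ℕ :=
  ∑ k, D (k, x k) + ∑ k, D (k - 1, z k - 1)

theorem sum_mul_sub_sum_mul_swap {ι R : Type*} [Fintype ι] [DecidableEq ι] [CommRing R]
    (f g : ι → R) (a b : ι) :
    ∑ k, f k * g k - ∑ k, f k * g (swap a b k) = (f a - f b) * (g a - g b) := by
  obtain rfl | hab := eq_or_ne a b
  · simp
  rw [← Finset.sum_sub_distrib, Fintype.sum_eq_add a b hab]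
  · rw [Equiv.swap_apply_left, Equiv.swap_apply_right]
    ring
  · rintro k ⟨hka, hkb⟩
    rw [Equiv.swap_apply_of_ne_of_ne hka hkb, sub_self]

theorem maslovIndex_rectDomain_swap {x : Perm (ZMod n)} {a b : ZMod n} (hab : a ≠ b) :
    maslovIndex x (x * swap a b) (rectDomain x a b)
      = 1 + 2 * Finset.card {k | sbtw a k b ∧ sbtw (x a) (x k) (x b)} := by
  have hx : x a ≠ x b := x.injective.ne hab
  have hstart (k : ZMod n) : rectDomain x a b (k, x k)
      = (if k = a then 1 else 0) + if sbtw a k b ∧ sbtw (x a) (x k) (x b) then 1 else 0 := by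
    rw [rectDomain, icoInd_eq_add hab, icoInd_eq_add hx]
    obtain rfl | hka := eq_or_ne k a
    · simp [sbtw_irrefl_left]
    · simp [hka, ← ite_and, and_comm]
  have hend (k : ZMod n) : rectDomain x a b (k - 1, (x * swap a b) k - 1)
      = if sbtw a k b ∧ sbtw (x a) (x k) (x b) then 1 else 0 := by
    rw [rectDomain, icoInd_sub_one_eq_add hab, icoInd_sub_one_eq_add hx]
    obtain rfl | hka := eq_or_ne k a
    · simp [sbtw_irrefl_left, hab]
    obtain rfl | hkb := eq_or_ne k b
    · simp [sbtw_irrefl_right, sbtw_irrefl_left, hx]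
    · simp [hkb, Equiv.swap_apply_of_ne_of_ne hka hkb, ← ite_and, and_comm]
  simp only [maslovIndex, hstart, hend, Finset.sum_add_distrib, Finset.sum_ite_eq',
    Finset.mem_univ, if_true, Finset.card_filter]
  ring

theorem spansEmptyRect_iff_maslovIndex {x : Perm (ZMod n)} {a b : ZMod n} :
    SpansEmptyRect x a b ↔ a ≠ b ∧ maslovIndex x (x * swap a b) (rectDomain x a b) = 1 := by
  rw [spansEmptyRect_iff]
  refine and_congr_right fun hab => ?_
  simp [maslovIndex_rectDomain_swap hab, Finset.filter_eq_empty_iff]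

theorem one_le_maslovIndex_rectDomain {x : Perm (ZMod n)} {a b : ZMod n} (hab : a ≠ b) :
    1 ≤ maslovIndex x (x * swap a b) (rectDomain x a b) := by
  rw [maslovIndex_rectDomain_swap hab]
  exact Nat.le_add_right _ _

theorem sum_rectDomain_sub_one_sub_sum_swap (x y : Perm (ZMod n)) (a b c d : ZMod n) :
    (∑ k, rectDomain x a b (k - 1, y k - 1)
        - ∑ k, rectDomain x a b (k - 1, (y * swap c d) k - 1) : ℤ)
      = (icoInd c d b - icoInd c d a)
        * (icoInd (y c) (y d) (x b) - icoInd (y c) (y d) (x a)) := by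
  rw [← icoInd_sub_one_sub a b, ← icoInd_sub_one_sub (x a) (x b)]
  simpa [rectDomain] using sum_mul_sub_sum_mul_swap (fun k => (icoInd a b (k - 1) : ℤ))
    (fun k => (icoInd (x a) (x b) (y k - 1) : ℤ)) c d

theorem sum_rectDomain_sub_sum_swap (x y : Perm (ZMod n)) (a b c d : ZMod n) :
    (∑ k, rectDomain y c d (k, x k) - ∑ k, rectDomain y c d (k, (x * swap a b) k) : ℤ)
      = (icoInd c d a - icoInd c d b)
        * (icoInd (y c) (y d) (x a) - icoInd (y c) (y d) (x b)) := by
  simpa [rectDomain] using sum_mul_sub_sum_mul_swap (fun k => (icoInd c d k : ℤ))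
    (fun k => (icoInd (y c) (y d) (x k) : ℤ)) a b

theorem maslovIndex_rectDomain_add (x : Perm (ZMod n)) (a b c d : ZMod n) :
    maslovIndex x (x * swap a b * swap c d)
        (rectDomain x a b + rectDomain (x * swap a b) c d)
      = maslovIndex x (x * swap a b) (rectDomain x a b)
        + maslovIndex (x * swap a b) (x * swap a b * swap c d)
          (rectDomain (x * swap a b) c d) := by
  have hend := sum_rectDomain_sub_one_sub_sum_swap x (x * swap a b) a b c d
  have hstart := sum_rectDomain_sub_sum_swap x (x * swap a b) a b c d
  simp only [maslovIndex, Pi.add_apply, Finset.sum_add_distrib]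
  rw [← Nat.cast_inj (R := ℤ)]
  simp only [Nat.cast_add]
  linear_combination hstart - hend

end MaslovIndex

/-- A pair of rectangles, given by their pairs of columns. The first rectangle starts at some
generator `x`, and the second one starts at the generator where the first one ends. -/
abbrev RectPair (n : ℕ) := (ZMod n × ZMod n) × (ZMod n × ZMod n)

namespace RectPair

/-- The generator at which the second rectangle of the pair ends. -/
def endpoint (x : Perm (ZMod n)) (s : RectPair n) : Perm (ZMod n) :=
  x * swap s.1.1 s.1.2 * swap s.2.1 s.2.2

/-- The sum of the domains of the two rectangles of the pair. -/
noncomputable def domain (x : Perm (ZMod n)) (s : RectPair n) : Domain n :=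
  rectDomain x s.1.1 s.1.2 + rectDomain (x * swap s.1.1 s.1.2) s.2.1 s.2.2

/-- Both rectangles of the pair are empty. -/
def IsJuxtaposition (x : Perm (ZMod n)) (s : RectPair n) : Prop :=
  SpansEmptyRect x s.1.1 s.1.2 ∧ SpansEmptyRect (x * swap s.1.1 s.1.2) s.2.1 s.2.2

/-- The two rectangles of the pair use the same two columns. The domain of such a juxtaposition is
an annulus. -/
def IsAnnular : RectPair n → Prop
  | (p, q) => q = p ∨ q = p.swap

theorem isJuxtaposition_iff_maslovIndex [NeZero n] {x : Perm (ZMod n)} {s : RectPair n} :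
    IsJuxtaposition x s ↔
      s.1.1 ≠ s.1.2 ∧ s.2.1 ≠ s.2.2 ∧ maslovIndex x (endpoint x s) (domain x s) = 2 := by
  rw [IsJuxtaposition, spansEmptyRect_iff_maslovIndex, spansEmptyRect_iff_maslovIndex,
    endpoint, domain, maslovIndex_rectDomain_add]
  constructor
  · rintro ⟨⟨h₁, hfst⟩, h₂, hsnd⟩
    exact ⟨h₁, h₂, by omega⟩
  · rintro ⟨h₁, h₂, hsum⟩
    have hfst := one_le_maslovIndex_rectDomain (x := x) h₁
    have hsnd := one_le_maslovIndex_rectDomain (x := x * swap s.1.1 s.1.2) h₂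
    exact ⟨⟨h₁, by omega⟩, h₂, by omega⟩

/-- `IsRecut x s t` says that `s` and `t` are the two decompositions of a common domain starting at
`x`: a union of two disjoint, nested or crossing rectangles without common corners, or an L-shape
cut along either of the two edges that meet at its reflex corner. The four L-shaped cases are named
after the corner that is missing from the L-shape. -/
inductive IsRecut [NeZero n] (x : Perm (ZMod n)) : RectPair n → RectPair n → Prop
  | disjoint {a b c d : ZMod n} (hab : a ≠ b) (hcd : c ≠ d) (hca : c ≠ a) (hcb : c ≠ b)
      (hda : d ≠ a) (hdb : d ≠ b) : IsRecut x ((a, b), (c, d)) ((c, d), (a, b))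
  | lowerRight {p q r : ZMod n} (hcol : sbtw p q r) (hrow : sbtw (x p) (x q) (x r)) :
      IsRecut x ((p, q), (p, r)) ((q, r), (p, q))
  | upperLeft {p q r : ZMod n} (hcol : sbtw p q r) (hrow : sbtw (x p) (x q) (x r)) :
      IsRecut x ((p, q), (q, r)) ((q, r), (p, r))
  | upperRight {p q r : ZMod n} (hcol : sbtw p q r) (hrow : sbtw (x p) (x r) (x q)) :
      IsRecut x ((p, r), (p, q)) ((p, q), (q, r))
  | lowerLeft {p q r : ZMod n} (hcol : sbtw p q r) (hrow : sbtw (x p) (x r) (x q)) :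
      IsRecut x ((q, r), (p, q)) ((p, r), (q, r))

section Recut

variable [NeZero n] {x : Perm (ZMod n)} {s t : RectPair n}

theorem IsRecut.endpoint_eq (h : IsRecut x s t) : endpoint x s = endpoint x t := by
  simp only [endpoint, mul_assoc]
  congr 1
  cases h with
  | disjoint hab hcd hca hcb hda hdb =>
    rw [Equiv.mul_swap_eq_swap_mul, Equiv.swap_apply_of_ne_of_ne hca hcb,
      Equiv.swap_apply_of_ne_of_ne hda hdb]
  | @lowerRight p q r hcol hrow =>
    obtain ⟨-, hpr, hqr⟩ := pairwise_ne_of_sbtw hcol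
    rw [Equiv.mul_swap_eq_swap_mul (swap p q) p r, Equiv.swap_apply_left,
      Equiv.swap_apply_of_ne_of_ne hpr.symm hqr.symm]
  | @upperLeft p q r hcol hrow =>
    obtain ⟨hpq, hpr, -⟩ := pairwise_ne_of_sbtw hcol
    rw [Equiv.mul_swap_eq_swap_mul (swap q r) p r, Equiv.swap_apply_right,
      Equiv.swap_apply_of_ne_of_ne hpq hpr]
  | @upperRight p q r hcol hrow =>
    obtain ⟨-, hpr, hqr⟩ := pairwise_ne_of_sbtw hcol
    rw [Equiv.mul_swap_eq_swap_mul (swap p q) q r, Equiv.swap_apply_right,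
      Equiv.swap_apply_of_ne_of_ne hpr.symm hqr.symm]
  | @lowerLeft p q r hcol hrow =>
    obtain ⟨hpq, hpr, -⟩ := pairwise_ne_of_sbtw hcol
    rw [Equiv.mul_swap_eq_swap_mul (swap q r) p q, Equiv.swap_apply_left,
      Equiv.swap_apply_of_ne_of_ne hpq hpr]

theorem IsRecut.domain_eq (h : IsRecut x s t) : domain x s = domain x t := by
  funext k
  simp only [domain, Pi.add_apply, rectDomain, Perm.mul_apply]
  cases h with
  | disjoint hab hcd hca hcb hda hdb =>
    simp only [Equiv.swap_apply_of_ne_of_ne hca hcb, Equiv.swap_apply_of_ne_of_ne hda hdb,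
      Equiv.swap_apply_of_ne_of_ne hca.symm hda.symm,
      Equiv.swap_apply_of_ne_of_ne hcb.symm hdb.symm, add_comm]
  | lowerRight hcol hrow | upperLeft hcol hrow | upperRight hcol hrow | lowerLeft hcol hrow =>
    obtain ⟨hpq, hpr, hqr⟩ := pairwise_ne_of_sbtw hcol
    simp only [Equiv.swap_apply_left, Equiv.swap_apply_right,
      Equiv.swap_apply_of_ne_of_ne hpq hpr, Equiv.swap_apply_of_ne_of_ne hpq.symm hqr,
      Equiv.swap_apply_of_ne_of_ne hpr.symm hqr.symm, ← icoInd_add_icoInd hcol,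
      ← icoInd_add_icoInd hrow, ← icoInd_add_icoInd hrow.cyclic_left.cyclic_left]
    ring

theorem IsRecut.isJuxtaposition_iff (h : IsRecut x s t) :
    IsJuxtaposition x s ↔ IsJuxtaposition x t := by
  rw [isJuxtaposition_iff_maslovIndex, isJuxtaposition_iff_maslovIndex, h.endpoint_eq,
    h.domain_eq, ← and_assoc, ← and_assoc]
  refine and_congr_left fun _ => iff_of_true ?_ ?_ <;> cases h with
  | disjoint hab hcd => exact ⟨by assumption, by assumption⟩
  | lowerRight hcol | upperLeft hcol | upperRight hcol | lowerLeft hcol =>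
    obtain ⟨hpq, hpr, hqr⟩ := pairwise_ne_of_sbtw hcol
    exact ⟨by assumption, by assumption⟩

theorem IsRecut.ne (h : IsRecut x s t) : s ≠ t := by
  cases h with
  | disjoint hab hcd hca => simp [hca.symm]
  | lowerRight hcol | upperLeft hcol | upperRight hcol | lowerLeft hcol =>
    obtain ⟨hpq, -, hqr⟩ := pairwise_ne_of_sbtw hcol
    simp [hpq, hqr, hqr.symm, hpq.symm]

theorem IsRecut.not_isAnnular (h : IsRecut x s t) : ¬ s.IsAnnular ∧ ¬ t.IsAnnular := by
  cases h with
  | disjoint hab hcd hca hcb hda hdb => simp [IsAnnular, *, hca.symm, hcb.symm]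
  | lowerRight hcol | upperLeft hcol | upperRight hcol | lowerLeft hcol =>
    obtain ⟨hpq, hpr, hqr⟩ := pairwise_ne_of_sbtw hcol
    simp [IsAnnular, hpq, hpr, hqr, hqr.symm, hpq.symm, hpr.symm]

end Recut

/-- The other decomposition of the domain of a non-annular juxtaposition starting at `x`. -/
noncomputable def recut [NeZero n] (x : Perm (ZMod n)) : RectPair n → RectPair n
  | ((a, b), (c, d)) =>
    if c = a then if sbtw a b d then ((b, d), (a, b)) else ((a, d), (d, b))
    else if c = b then if sbtw (x a) (x b) (x d) then ((b, d), (a, d)) else ((a, d), (a, b))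
    else if d = a then if sbtw (x c) (x a) (x b) then ((c, a), (c, b)) else ((c, b), (a, b))
    else if d = b then if sbtw c a b then ((c, a), (a, b)) else ((c, b), (a, c))
    else ((c, d), (a, b))

theorem IsRecut.recut_eq [NeZero n] {x : Perm (ZMod n)} {s t : RectPair n} (h : IsRecut x s t) :
    recut x s = t ∧ recut x t = s := by
  cases h with
  | disjoint hab hcd hca hcb hda hdb =>
    simp [recut, *, hca.symm, hcb.symm, hda.symm, hdb.symm]
  | lowerRight hcol hrow | upperLeft hcol hrow | upperRight hcol hrow | lowerLeft hcol hrow =>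
    obtain ⟨hpq, hpr, hqr⟩ := pairwise_ne_of_sbtw hcol
    simp [recut, hcol, hrow, hcol.cyclic_left.not_sbtw, hcol.cyclic_right.not_sbtw,
      hrow.cyclic_left.not_sbtw, hpq, hpr, hqr, hqr.symm, hpq.symm, hpr.symm]

section Existence

variable [NeZero n] {x : Perm (ZMod n)}

theorem exists_isRecut_of_common_left {p q r : ZMod n} (hqr : q ≠ r)
    (hs : IsJuxtaposition x ((p, q), (p, r))) :
    ∃ t, IsRecut x ((p, q), (p, r)) t ∨ IsRecut x t ((p, q), (p, r)) := by
  simp only [IsJuxtaposition, spansEmptyRect_iff] at hs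
  obtain ⟨⟨hpq, hfst⟩, hpr, hsnd⟩ := hs
  have hfst := hfst r
  have hsnd := hsnd q
  simp only [Perm.mul_apply, Equiv.swap_apply_left, Equiv.swap_apply_right,
    Equiv.swap_apply_of_ne_of_ne hpr.symm hqr.symm] at hfst hsnd
  have hcol := sbtw_or_sbtw_of_ne hpq hpr hqr
  obtain hrow | hrow := sbtw_or_sbtw_of_ne (x.injective.ne hpq) (x.injective.ne hpr)
    (x.injective.ne hqr)
  · obtain hcol | hcol := hcol
    · exact ⟨_, .inl (.lowerRight hcol hrow)⟩
    · exact ⟨_, .inl (.upperRight hcol hrow)⟩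
  · exact (hcol.elim (hsnd ⟨·, hrow.cyclic_right⟩) (hfst ⟨·, hrow⟩)).elim

theorem exists_isRecut_of_right_eq_left {p q r : ZMod n} (hpr : p ≠ r)
    (hs : IsJuxtaposition x ((p, q), (q, r))) :
    ∃ t, IsRecut x ((p, q), (q, r)) t ∨ IsRecut x t ((p, q), (q, r)) := by
  simp only [IsJuxtaposition, spansEmptyRect_iff] at hs
  obtain ⟨⟨hpq, hfst⟩, hqr, hsnd⟩ := hs
  have hfst := hfst r
  have hsnd := hsnd p
  simp only [Perm.mul_apply, Equiv.swap_apply_left, Equiv.swap_apply_right,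
    Equiv.swap_apply_of_ne_of_ne hpr.symm hqr.symm] at hfst hsnd
  have hrow := sbtw_or_sbtw_of_ne (x.injective.ne hpq) (x.injective.ne hpr) (x.injective.ne hqr)
  obtain hcol | hcol := sbtw_or_sbtw_of_ne hpq hpr hqr
  · obtain hrow | hrow := hrow
    · exact ⟨_, .inl (.upperLeft hcol hrow)⟩
    · exact ⟨_, .inr (.upperRight hcol hrow)⟩
  · exact (hrow.elim (hsnd ⟨hcol.cyclic_right, ·⟩) (hfst ⟨hcol, ·⟩)).elim

theorem exists_isRecut_of_left_eq_right {p q r : ZMod n} (hpr : p ≠ r)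
    (hs : IsJuxtaposition x ((q, r), (p, q))) :
    ∃ t, IsRecut x ((q, r), (p, q)) t ∨ IsRecut x t ((q, r), (p, q)) := by
  simp only [IsJuxtaposition, spansEmptyRect_iff] at hs
  obtain ⟨⟨hqr, hfst⟩, hpq, hsnd⟩ := hs
  have hfst := hfst p
  have hsnd := hsnd r
  simp only [Perm.mul_apply, Equiv.swap_apply_left, Equiv.swap_apply_right,
    Equiv.swap_apply_of_ne_of_ne hpq hpr] at hfst hsnd
  have hrow := sbtw_or_sbtw_of_ne (x.injective.ne hpq) (x.injective.ne hpr) (x.injective.ne hqr)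
  obtain hcol | hcol := sbtw_or_sbtw_of_ne hpq hpr hqr
  · obtain hrow | hrow := hrow
    · exact ⟨_, .inr (.lowerRight hcol hrow)⟩
    · exact ⟨_, .inl (.lowerLeft hcol hrow)⟩
  · exact (hrow.elim (hsnd ⟨hcol, ·⟩) (hfst ⟨hcol.cyclic_right, ·.cyclic_right⟩)).elim

theorem exists_isRecut_of_common_right {p q r : ZMod n} (hpq : p ≠ q)
    (hs : IsJuxtaposition x ((q, r), (p, r))) :
    ∃ t, IsRecut x ((q, r), (p, r)) t ∨ IsRecut x t ((q, r), (p, r)) := by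
  simp only [IsJuxtaposition, spansEmptyRect_iff] at hs
  obtain ⟨⟨hqr, hfst⟩, hpr, hsnd⟩ := hs
  have hfst := hfst p
  have hsnd := hsnd q
  simp only [Perm.mul_apply, Equiv.swap_apply_left, Equiv.swap_apply_right,
    Equiv.swap_apply_of_ne_of_ne hpq hpr] at hfst hsnd
  have hcol := sbtw_or_sbtw_of_ne hpq hpr hqr
  obtain hrow | hrow := sbtw_or_sbtw_of_ne (x.injective.ne hpq) (x.injective.ne hpr)
    (x.injective.ne hqr)
  · obtain hcol | hcol := hcol
    · exact ⟨_, .inr (.upperLeft hcol hrow)⟩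
    · exact ⟨_, .inr (.lowerLeft hcol.cyclic_right hrow.cyclic_left)⟩
  · exact (hcol.elim (hsnd ⟨·, hrow⟩) (hfst ⟨·.cyclic_right, hrow.cyclic_right⟩)).elim

theorem IsJuxtaposition.exists_isRecut {s : RectPair n} (hs : IsJuxtaposition x s)
    (hann : ¬ s.IsAnnular) : ∃ t, IsRecut x s t ∨ IsRecut x t s := by
  obtain ⟨⟨a, b⟩, ⟨c, d⟩⟩ := s
  simp only [IsAnnular, Prod.mk.injEq, Prod.swap_prod_mk, not_or, not_and] at hann
  obtain rfl | hca := eq_or_ne c a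
  · exact exists_isRecut_of_common_left (Ne.symm (hann.1 rfl)) hs
  obtain rfl | hcb := eq_or_ne c b
  · exact exists_isRecut_of_right_eq_left (Ne.symm (hann.2 rfl)) hs
  obtain rfl | hda := eq_or_ne d a
  · exact exists_isRecut_of_left_eq_right hcb hs
  obtain rfl | hdb := eq_or_ne d b
  · exact exists_isRecut_of_common_right hca hs
  · have hs' := isJuxtaposition_iff_maslovIndex.1 hs
    exact ⟨_, .inl (.disjoint hs'.1 hs'.2.1 hca hcb hda hdb)⟩

theorem IsJuxtaposition.isRecut_recut {s : RectPair n} (hs : IsJuxtaposition x s)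
    (hann : ¬ s.IsAnnular) : IsRecut x s (recut x s) ∨ IsRecut x (recut x s) s := by
  obtain ⟨t, h | h⟩ := hs.exists_isRecut hann
  · exact .inl (h.recut_eq.1.symm ▸ h)
  · exact .inr (h.recut_eq.2.symm ▸ h)

end Existence

end RectPair

/-- The multiplicities of a domain at a set of markings, one in each column `k`, in row `σ k`. -/
def marks (σ : Perm (ZMod n)) (D : Domain n) : ZMod n → ℕ := fun k => D (k, σ k)

theorem marks_add (σ : Perm (ZMod n)) (D E : Domain n) : marks σ (D + E) = marks σ D + marks σ E :=
  rfl

namespace RectPair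

section Annuli

variable {x : Perm (ZMod n)} {a b : ZMod n}

theorem endpoint_of_isAnnular {s : RectPair n} (hs : s.IsAnnular) : endpoint x s = x := by
  obtain ⟨p, q⟩ := s
  obtain rfl | rfl := hs
  · simp [endpoint, mul_assoc]
  · simp [endpoint, mul_assoc, Equiv.swap_comm p.2 p.1]

/-- The decomposition into two rectangles of the annulus formed by the column `m`. -/
def verticalAnnulus (m : ZMod n) : RectPair n := ((m, m + 1), (m, m + 1))

/-- The decomposition into two rectangles, starting at `x`, of the annulus formed by the row `m`. -/
def horizontalAnnulus (x : Perm (ZMod n)) (m : ZMod n) : RectPair n :=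
  ((x.symm m, x.symm (m + 1)), (x.symm (m + 1), x.symm m))

theorem verticalAnnulus_ne_horizontalAnnulus [Fact (1 < n)] (x : Perm (ZMod n)) (m m' : ZMod n) :
    verticalAnnulus m ≠ horizontalAnnulus x m' := by
  simp +contextual [verticalAnnulus, horizontalAnnulus]

variable [NeZero n]

theorem marks_domain_vertical (σ : Perm (ZMod n)) (hab : a ≠ b) :
    marks σ (domain x ((a, b), (a, b))) = icoInd a b := by
  funext k
  simp [marks, domain, rectDomain, ← mul_add, icoInd_add_icoInd_swap (x.injective.ne hab)]

theorem marks_domain_horizontal (σ : Perm (ZMod n)) (hab : a ≠ b) :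
    marks σ (domain x ((a, b), (b, a))) = icoInd (x a) (x b) ∘ σ := by
  funext k
  simp [marks, domain, rectDomain, ← add_mul, icoInd_add_icoInd_swap hab]

variable [Fact (1 < n)]

theorem isJuxtaposition_verticalAnnulus (m : ZMod n) : IsJuxtaposition x (verticalAnnulus m) := by
  simp [IsJuxtaposition, verticalAnnulus, spansEmptyRect_iff, not_sbtw_add_one]

theorem isJuxtaposition_horizontalAnnulus (m : ZMod n) :
    IsJuxtaposition x (horizontalAnnulus x m) := by
  simp [IsJuxtaposition, horizontalAnnulus, spansEmptyRect_iff, not_sbtw_add_one]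

theorem marks_domain_verticalAnnulus (σ : Perm (ZMod n)) (m : ZMod n) :
    marks σ (domain x (verticalAnnulus m)) = Pi.single m 1 := by
  rw [verticalAnnulus, marks_domain_vertical σ (by simp), icoInd_add_one]

theorem marks_domain_horizontalAnnulus (σ : Perm (ZMod n)) (j : ZMod n) :
    marks σ (domain x (horizontalAnnulus x (σ j))) = Pi.single j 1 := by
  rw [horizontalAnnulus, marks_domain_horizontal σ (by simp), x.apply_symm_apply,
    x.apply_symm_apply, icoInd_add_one, Pi.single_comp_equiv, σ.symm_apply_apply]

theorem isJuxtaposition_and_marks_and_isAnnular_iff {σ : Perm (ZMod n)} {j : ZMod n}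
    {s : RectPair n} :
    (IsJuxtaposition x s ∧ marks σ (domain x s) = Pi.single j 1) ∧ s.IsAnnular ↔
      s = verticalAnnulus j ∨ s = horizontalAnnulus x (σ j) := by
  constructor
  · obtain ⟨⟨a, b⟩, q⟩ := s
    rintro ⟨⟨hs, hm⟩, rfl | rfl⟩ <;> have hab : a ≠ b := hs.1.1.1
    · rw [marks_domain_vertical σ hab, icoInd_eq_single_iff] at hm
      exact .inl (by rw [hm.1, hm.2, verticalAnnulus])
    · rw [Prod.swap_prod_mk, marks_domain_horizontal σ hab, ← Equiv.eq_comp_symm,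
        Pi.single_comp_equiv, Equiv.symm_symm, icoInd_eq_single_iff] at hm
      exact .inr (by rw [horizontalAnnulus, ← hm.2, ← hm.1, x.symm_apply_apply,
        x.symm_apply_apply, Prod.swap_prod_mk])
  · rintro (rfl | rfl)
    · exact ⟨⟨isJuxtaposition_verticalAnnulus j, marks_domain_verticalAnnulus σ j⟩, .inl rfl⟩
    · exact ⟨⟨isJuxtaposition_horizontalAnnulus _, marks_domain_horizontalAnnulus σ j⟩, .inr rfl⟩

end Annuli

end RectPair

section GridComplex

open RectPair

variable [NeZero n]

/-- The monomial in the variables `U_i` with exponents `f`. -/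
noncomputable def uMonomial (f : ZMod n → ℕ) : GridRing n := ∏ i, MvPolynomial.X i ^ f i

theorem uMonomial_add (f g : ZMod n → ℕ) : uMonomial (f + g) = uMonomial f * uMonomial g := by
  simp only [uMonomial, Pi.add_apply, pow_add, Finset.prod_mul_distrib]

theorem uMonomial_single (i : ZMod n) : uMonomial (Pi.single i 1) = MvPolynomial.X i := by
  simp [uMonomial, Pi.single_apply, pow_ite]

theorem Omonomial_eq_uMonomial (σO x : Perm (ZMod n)) (a b : ZMod n) :
    Omonomial σO x a b = uMonomial (marks σO (rectDomain x a b)) := by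
  simp only [Omonomial, uMonomial, Ocount, marks, rectDomain_apply]

/-- The empty rectangles starting at `x` whose multiplicities at the `X`-markings are `v`. -/
noncomputable def emptyRects (σX : Perm (ZMod n)) (v : ZMod n → ℕ) (x : Perm (ZMod n)) :
    Finset (ZMod n × ZMod n) :=
  {p | SpansEmptyRect x p.1 p.2 ∧ marks σX (rectDomain x p.1 p.2) = v}

/-- The endomorphism of the grid complex that counts the empty rectangles whose multiplicities at
the `X`-markings are `v`. It is the differential for `v = 0`, and for `v` the indicator of `j` it is
the homotopy between the actions of the variables of the two `O`-markings in the same row and in the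
same column as `X_j`. -/
noncomputable def rectMap (σO σX : Perm (ZMod n)) (v : ZMod n → ℕ) :
    GridC n →ₗ[GridRing n] GridC n :=
  Finsupp.linearCombination (GridRing n) fun x => ∑ p ∈ emptyRects σX v x,
    Finsupp.single (x * swap p.1 p.2) (uMonomial (marks σO (rectDomain x p.1 p.2)))

theorem rectMap_single (σO σX : Perm (ZMod n)) (v : ZMod n → ℕ) (x : Perm (ZMod n))
    (r : GridRing n) : rectMap σO σX v (Finsupp.single x r) = r • ∑ p ∈ emptyRects σX v x,
      Finsupp.single (x * swap p.1 p.2) (uMonomial (marks σO (rectDomain x p.1 p.2))) :=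
  Finsupp.linearCombination_single ..

theorem countsInDiff_iff {σX x y : Perm (ZMod n)} {a b : ZMod n} :
    CountsInDiff σX x y a b ↔ y = x * swap a b ∧ (a, b) ∈ emptyRects σX 0 x := by
  simp [CountsInDiff, emptyRects, SpansEmptyRect, IsEmptyRect, IsRect, funext_iff, marks,
    rectDomain_apply]
  tauto

theorem diffImage_eq_sum_emptyRects (σO σX x : Perm (ZMod n)) :
    diffImage σO σX x = ∑ p ∈ emptyRects σX 0 x,
      Finsupp.single (x * swap p.1 p.2) (uMonomial (marks σO (rectDomain x p.1 p.2))) := by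
  have hpair (y : Perm (ZMod n)) := Fintype.sum_prod_type' fun a b =>
    if CountsInDiff σX x y a b then Finsupp.single y (Omonomial σO x a b) else 0
  simp only [diffImage, ← hpair]
  rw [Finset.sum_comm]
  simp only [countsInDiff_iff, ite_and, Omonomial_eq_uMonomial, Finset.sum_ite_eq',
    Finset.mem_univ, if_true, Prod.mk.eta, Finset.sum_ite_mem, Finset.univ_inter]

theorem gridDiff_eq_rectMap (σO σX : Perm (ZMod n)) : gridDiff σO σX = rectMap σO σX 0 := by
  simp only [gridDiff, diffImage_eq_sum_emptyRects]
  rfl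

/-- The term that a juxtaposition starting at `x` contributes to a composition of two maps of the
form `rectMap`. -/
noncomputable def RectPair.term (σO x : Perm (ZMod n)) (s : RectPair n) : GridC n :=
  Finsupp.single (endpoint x s) (uMonomial (marks σO (domain x s)))

theorem rectMap_rectMap_single (σO σX : Perm (ZMod n)) (v w : ZMod n → ℕ) (x : Perm (ZMod n)) :
    rectMap σO σX w (rectMap σO σX v (Finsupp.single x 1)) =
      ∑ s : RectPair n with s.IsJuxtaposition x ∧ marks σX (rectDomain x s.1.1 s.1.2) = v ∧
        marks σX (rectDomain (x * swap s.1.1 s.1.2) s.2.1 s.2.2) = w, s.term σO x := by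
  rw [rectMap_single, one_smul, map_sum, Finset.sum_finset_product _ (emptyRects σX v x)
    fun p => emptyRects σX w (x * swap p.1 p.2)]
  · simp only [rectMap_single, Finset.smul_sum, Finsupp.smul_single, smul_eq_mul, ← uMonomial_add,
      ← marks_add]
    rfl
  · intro s
    rw [Finset.mem_filter_univ (α := RectPair n)]
    simp only [emptyRects, RectPair.IsJuxtaposition, Finset.mem_filter_univ]
    tauto

theorem add_eq_single_one_iff {ι : Type*} [DecidableEq ι] {f g : ι → ℕ} {j : ι} :
    f + g = Pi.single j 1 ↔ f = Pi.single j 1 ∧ g = 0 ∨ f = 0 ∧ g = Pi.single j 1 := by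
  constructor
  · intro h
    have hne {k : ι} (hk : k ≠ j) : f k = 0 ∧ g k = 0 := by
      simpa [hk] using congrFun h k
    have hj : f j + g j = 1 := by simpa using congrFun h j
    obtain ⟨hf, -⟩ | ⟨-, hg⟩ := Nat.add_eq_one_iff.1 hj
    · have hf0 : f = 0 := funext fun k => by
        obtain rfl | hk := eq_or_ne k j
        exacts [hf, (hne hk).1]
      exact .inr ⟨hf0, by rwa [hf0, zero_add] at h⟩
    · have hg0 : g = 0 := funext fun k => by
        obtain rfl | hk := eq_or_ne k j
        exacts [hg, (hne hk).2]
      exact .inl ⟨by rwa [hg0, add_zero] at h, hg0⟩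
  · rintro (⟨rfl, rfl⟩ | ⟨rfl, rfl⟩)
    exacts [add_zero _, zero_add _]

theorem rectMap_zero_rectMap_single_add (σO σX x : Perm (ZMod n)) (j : ZMod n) :
    rectMap σO σX 0 (rectMap σO σX (Pi.single j 1) (Finsupp.single x 1))
        + rectMap σO σX (Pi.single j 1) (rectMap σO σX 0 (Finsupp.single x 1)) =
      ∑ s : RectPair n with s.IsJuxtaposition x ∧ marks σX (s.domain x) = Pi.single j 1,
        s.term σO x := by
  rw [rectMap_rectMap_single, rectMap_rectMap_single, ← Finset.sum_union, ← Finset.filter_or]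
  · simp only [RectPair.domain, marks_add, add_eq_single_one_iff, and_or_left]
  · refine Finset.disjoint_filter.2 fun s _ hs hs' => ?_
    simpa [hs.2.1] using hs'.2.1

theorem sum_term_not_isAnnular (σO σX x : Perm (ZMod n)) (v : ZMod n → ℕ) :
    ∑ s : RectPair n with (s.IsJuxtaposition x ∧ marks σX (s.domain x) = v) ∧ ¬ s.IsAnnular,
      s.term σO x = 0 := by
  refine Finset.sum_involution (fun s _ => s.recut x) ?_ ?_ ?_ ?_ <;> intro s hs <;>
    obtain ⟨⟨hs, hm⟩, hann⟩ := (Finset.mem_filter_univ _).1 hs <;>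
    have hrecut := hs.isRecut_recut hann
  · have hterm : (s.recut x).term σO x = s.term σO x := by
      obtain h | h := hrecut <;> simp only [RectPair.term, h.endpoint_eq, h.domain_eq]
    rw [hterm, ZModModule.add_self]
  · exact fun _ => hrecut.elim (·.ne.symm) (·.ne)
  · rw [Finset.mem_filter_univ]
    obtain h | h := hrecut
    · exact ⟨⟨h.isJuxtaposition_iff.1 hs, h.domain_eq ▸ hm⟩, h.not_isAnnular.2⟩
    · exact ⟨⟨h.isJuxtaposition_iff.2 hs, h.domain_eq.symm ▸ hm⟩, h.not_isAnnular.1⟩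
  · exact hrecut.elim (·.recut_eq.2) (·.recut_eq.1)

theorem sum_term_isAnnular [Fact (1 < n)] {σO σX : Perm (ZMod n)} {i j : ZMod n}
    (hij : σX j = σO i) (x : Perm (ZMod n)) :
    ∑ s : RectPair n with (s.IsJuxtaposition x ∧ marks σX (s.domain x) = Pi.single j 1) ∧
        s.IsAnnular, s.term σO x
      = Finsupp.single x (MvPolynomial.X j) + Finsupp.single x (MvPolynomial.X i) := by
  have hfilter : Finset.univ.filter (fun s : RectPair n =>
      (s.IsJuxtaposition x ∧ marks σX (s.domain x) = Pi.single j 1) ∧ s.IsAnnular)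
      = {verticalAnnulus j, horizontalAnnulus x (σO i)} := by
    ext s
    simp only [isJuxtaposition_and_marks_and_isAnnular_iff, hij, Finset.mem_filter_univ,
      Finset.mem_insert, Finset.mem_singleton]
  have hvert : (verticalAnnulus j).IsAnnular := .inl rfl
  have hhoriz : (horizontalAnnulus x (σO i)).IsAnnular := .inr rfl
  rw [hfilter, Finset.sum_pair (verticalAnnulus_ne_horizontalAnnulus _ _ _)]
  simp only [term, endpoint_of_isAnnular hvert, endpoint_of_isAnnular hhoriz,
    marks_domain_verticalAnnulus, marks_domain_horizontalAnnulus, uMonomial_single]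

theorem Umul_sub_Umul_eq [Fact (1 < n)] {σO σX : Perm (ZMod n)} {i j : ZMod n}
    (hij : σX j = σO i) :
    Umul n i - Umul n j = gridDiff σO σX ∘ₗ rectMap σO σX (Pi.single j 1)
      + rectMap σO σX (Pi.single j 1) ∘ₗ gridDiff σO σX := by
  refine Finsupp.lhom_ext' fun x => LinearMap.ext_ring ?_
  simp only [gridDiff_eq_rectMap, LinearMap.comp_apply, LinearMap.add_apply, LinearMap.sub_apply,
    Finsupp.lsingle_apply, rectMap_zero_rectMap_single_add]
  rw [← Finset.sum_filter_add_sum_filter_not _ RectPair.IsAnnular, Finset.filter_filter,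
    Finset.filter_filter, sum_term_not_isAnnular, add_zero, sum_term_isAnnular hij,
    ZModModule.sub_eq_add, add_comm]
  simp [Umul]

end GridComplex

section ChainHomotopy

variable {R M : Type*} [Ring R] [AddCommGroup M] [Module R M] {d f g h : M →ₗ[R] M}

/-- Chain homotopy of endomorphisms `f` and `g` of a module with differential `d`. Neither
`d ∘ₗ d = 0` nor compatibility with `d` is part of the definition. -/
def ChainHomotopic (d f g : M →ₗ[R] M) : Prop := ∃ H : M →ₗ[R] M, f - g = d ∘ₗ H + H ∘ₗ d

theorem ChainHomotopic.refl (d f : M →ₗ[R] M) : ChainHomotopic d f f := ⟨0, by simp⟩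

theorem ChainHomotopic.trans (hfg : ChainHomotopic d f g) (hgh : ChainHomotopic d g h) :
    ChainHomotopic d f h := by
  obtain ⟨H, hH⟩ := hfg
  obtain ⟨K, hK⟩ := hgh
  refine ⟨H + K, ?_⟩
  rw [← sub_add_sub_cancel f g h, hH, hK, LinearMap.comp_add, LinearMap.add_comp]
  abel

theorem ChainHomotopic.exists_apply_eq_sub (hfg : ChainHomotopic d f g) {c : M} (hc : d c = 0) :
    ∃ b, d b = f c - g c := by
  obtain ⟨H, hH⟩ := hfg
  exact ⟨H c, by simpa [hc] using (LinearMap.congr_fun hH c).symm⟩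

end ChainHomotopy

theorem chainHomotopic_Umul_of_apply_eq [NeZero n] {σO σX : Perm (ZMod n)} {i j : ZMod n}
    (hij : σX j = σO i) : ChainHomotopic (gridDiff σO σX) (Umul n i) (Umul n j) := by
  obtain rfl | hn := (NeZero.one_le (n := n)).eq_or_lt
  · obtain rfl : i = j := Subsingleton.elim i j
    exact .refl _ _
  · have : Fact (1 < n) := ⟨hn⟩
    exact ⟨_, Umul_sub_Umul_eq hij⟩

theorem chainHomotopic_Umul_of_sameCycle [NeZero n] {σO σX : Perm (ZMod n)} {i j : ZMod n}
    (h : (σX⁻¹ * σO).SameCycle i j) :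
    ChainHomotopic (gridDiff σO σX) (Umul n i) (Umul n j) := by
  obtain ⟨m, rfl⟩ := h.exists_nat_pow_eq
  clear h
  induction m with
  | zero => exact .refl _ _
  | succ m ih => exact ih.trans (chainHomotopic_Umul_of_apply_eq (by simp [pow_succ']))

theorem Umul_chain_homotopic (n : ℕ) [NeZero n]
    (σO σX : Equiv.Perm (ZMod n)) (i j : ZMod n)
    -- `O_i` and `O_j` lie on the same link component: `i` and `j` are in the
    -- same orbit of the permutation `σX⁻¹ ∘ σO`:
    (h : (σX⁻¹ * σO).SameCycle i j) :
    -- `U_i` and `U_j` are chain homotopic …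
    (∃ H : GridC n →ₗ[GridRing n] GridC n,
      Umul n i - Umul n j =
        gridDiff σO σX ∘ₗ H + H ∘ₗ gridDiff σO σX) ∧
    -- … in particular they induce the same endomorphism of homology:
    (∀ c : GridC n, gridDiff σO σX c = 0 →
      ∃ d : GridC n, gridDiff σO σX d = Umul n i c - Umul n j c) := by
  have hU := chainHomotopic_Umul_of_sameCycle h
  exact ⟨hU, fun _ hc => hU.exists_apply_eq_sub hc⟩

end GridDiagrams
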